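/- Let n ≥ 2 and let ι be an admissible sequence adapted to the Cartan matrix of the given type. (i) In type B_n: the set of elements of the form S_{l_p}⋯S_{l_1} x_{r,n} (p ≥ 0, r, l_1,…,l_p ≥ 1) equals the set of tableaux [j_1,…,j_n]^B_s in Tab_{B,ι} with n rows and all entries in J_B. (ii) In type C_n: the set of elements of the form S_{l_p}⋯S_{l_1} x_{r,n} (p ≥ 0, r, l_1,…,l_p ≥ 1) equals the set of tableaux [j_1,…,j_t]^C_s in Tab_{C,ι} whose first entry is j_1 = ovl(n+1). -/

import Mathlib

noncomputable section

/-- The coordinate linear form `x_k` (as a coefficient vector). -/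
def xc (k : ℕ) : ℕ → ℚ := fun l => if l = k then 1 else 0

/-- Cartan matrix of type `A_n`. -/
def cartanA (_n : ℕ) (i j : ℕ) : ℤ :=
  if i = j then 2 else if i + 1 = j ∨ j + 1 = i then -1 else 0

/-- Cartan matrix of type `B_n`. -/
def cartanB (n : ℕ) (i j : ℕ) : ℤ :=
  if i = j then 2
  else if i = n ∧ j = n - 1 then -2
  else if i + 1 = j ∨ j + 1 = i then -1 else 0

/-- Cartan matrix of type `C_n`. -/
def cartanC (n : ℕ) (i j : ℕ) : ℤ :=
  if i = j then 2
  else if i = n - 1 ∧ j = n then -2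
  else if i + 1 = j ∨ j + 1 = i then -1 else 0

/-- Cartan matrix of type `D_n`. -/
def cartanD (n : ℕ) (i j : ℕ) : ℤ :=
  if i = j then 2
  else if (i = n - 1 ∧ j = n) ∨ (i = n ∧ j = n - 1) then 0
  else if (i + 1 = j ∨ j + 1 = i) ∨ (i = n ∧ j = n - 2) ∨ (i = n - 2 ∧ j = n) then -1
  else 0

/-- `ι` (with positions indexed by `k ≥ 1`) takes values in `{1,…,n}`, has no two equal
consecutive entries, and every index occurs infinitely often. -/
def Admissible (n : ℕ) (ι : ℕ → ℕ) : Prop :=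
  (∀ k, 1 ≤ k → 1 ≤ ι k ∧ ι k ≤ n) ∧
  (∀ k, 1 ≤ k → ι k ≠ ι (k + 1)) ∧
  (∀ i, 1 ≤ i → i ≤ n → ∀ N, ∃ k, N ≤ k ∧ ι k = i)

/-- `k^+`: the next position after `k` carrying the same letter. -/
def kplus (ι : ℕ → ℕ) (k : ℕ) : ℕ := sInf {l | k < l ∧ ι l = ι k}

/-- `k^-`: the previous position (`≥ 1`) carrying the same letter, `0` if none. -/
def kminus (ι : ℕ → ℕ) (k : ℕ) : ℕ := sSup {l | 0 < l ∧ l < k ∧ ι l = ι k}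

/-- The linear form `β_k` (with `β_0 = 0`). -/
def beta (A : ℕ → ℕ → ℤ) (ι : ℕ → ℕ) (k : ℕ) : ℕ → ℚ :=
  if k = 0 then 0
  else xc k + (∑ j ∈ Finset.Ioo k (kplus ι k), (A (ι k) (ι j) : ℚ) • xc j) + xc (kplus ι k)

/-- The piecewise-linear operator `S_k`. -/
def Sop (A : ℕ → ℕ → ℤ) (ι : ℕ → ℕ) (k : ℕ) (φ : ℕ → ℚ) : ℕ → ℚ :=
  if 0 < φ k then φ - φ k • beta A ι k
  else φ - φ k • beta A ι (kminus ι k)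

/-- Membership in `Ξ_ι`: forms obtained from some `x_{j_0}` by finitely many operators `S_k`. -/
inductive XiMem (A : ℕ → ℕ → ℤ) (ι : ℕ → ℕ) : (ℕ → ℚ) → Prop
  | base (k : ℕ) (hk : 1 ≤ k) : XiMem A ι (xc k)
  | step (k : ℕ) (hk : 1 ≤ k) (φ : ℕ → ℚ) (h : XiMem A ι φ) : XiMem A ι (Sop A ι k φ)

/-- The set `Ξ_ι`. -/
def Xi (A : ℕ → ℕ → ℤ) (ι : ℕ → ℕ) : Set (ℕ → ℚ) := { φ | XiMem A ι φ }

/-- Forms obtained from a set `g` of generators by finitely many operators `S_k`. -/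
inductive XiMemFrom (A : ℕ → ℕ → ℤ) (ι : ℕ → ℕ) (g : Set (ℕ → ℚ)) : (ℕ → ℚ) → Prop
  | base (φ : ℕ → ℚ) (h : φ ∈ g) : XiMemFrom A ι g φ
  | step (k : ℕ) (hk : 1 ≤ k) (φ : ℕ → ℚ) (h : XiMemFrom A ι g φ) :
      XiMemFrom A ι g (Sop A ι k φ)

/-- `ι` is adapted to the Cartan matrix `A`: for `i ≠ j` with `a_{i,j} ≠ 0`, consecutive
members of the subsequence of `ι` consisting of the letters `i`, `j` are distinct. -/
def Adapted (n : ℕ) (A : ℕ → ℕ → ℤ) (ι : ℕ → ℕ) : Prop :=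
  ∀ i j, 1 ≤ i → i ≤ n → 1 ≤ j → j ≤ n → i ≠ j → A i j ≠ 0 →
    ∀ k l, 1 ≤ k → k < l → (ι k = i ∨ ι k = j) → (ι l = i ∨ ι l = j) →
      (∀ m, k < m → m < l → ι m ≠ i ∧ ι m ≠ j) → ι k ≠ ι l

/-- Position of the first occurrence of the letter `i` in `ι`. -/
def firstOcc (ι : ℕ → ℕ) (i : ℕ) : ℕ := sInf {k | 1 ≤ k ∧ ι k = i}

/-- `p_{i,j} = 1` iff the first occurrence of `i` precedes the first occurrence of `j`. -/
def pval (ι : ℕ → ℕ) (i j : ℕ) : ℕ := if firstOcc ι i < firstOcc ι j then 1 else 0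

/-- The function `P(k)` for types A, B, C (and `P(k) = 0` for `k > n`, `k ≤ 1`). -/
def PABC (ι : ℕ → ℕ) (n k : ℕ) : ℕ :=
  if k ≤ n then ∑ t ∈ Finset.Icc 2 k, pval ι t (t - 1) else 0

/-- The function `P(k)` for type D. -/
def PD (ι : ℕ → ℕ) (n k : ℕ) : ℕ :=
  if k = n then (∑ t ∈ Finset.Icc 2 (n - 2), pval ι t (t - 1)) + pval ι n (n - 2)
  else if k ≤ n then ∑ t ∈ Finset.Icc 2 k, pval ι t (t - 1) else 0

/-- `occPos ι j s`: the position of the `s`-th occurrence of the letter `j` in `ι`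
(`0` for `s = 0`). -/
def occPos (ι : ℕ → ℕ) (j : ℕ) : ℕ → ℕ
  | 0 => 0
  | s + 1 => sInf {k | occPos ι j s < k ∧ ι k = j}

/-- The double-indexed coordinate form `x_{s,j}`, with the conventions
`x_{s,0} = x_{s,n+1} = 0` and `x_{s,j} = 0` for `s ≤ 0`. -/
def xsj (ι : ℕ → ℕ) (n : ℕ) (s : ℤ) (j : ℕ) : ℕ → ℚ :=
  if 1 ≤ s ∧ 1 ≤ j ∧ j ≤ n then xc (occPos ι j s.toNat) else 0

/-- The double-indexed form `β_{s,j}`. -/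
def betasj (A : ℕ → ℕ → ℤ) (ι : ℕ → ℕ) (s : ℤ) (j : ℕ) : ℕ → ℚ :=
  beta A ι (occPos ι j s.toNat)

/-- The double-indexed operator `S_{m,j}`. -/
def Ssj (A : ℕ → ℕ → ℤ) (ι : ℕ → ℕ) (m j : ℕ) (φ : ℕ → ℚ) : ℕ → ℚ :=
  Sop A ι (occPos ι j m) φ

/- Entries of the ordered sets `J_X` are encoded as natural numbers:
an unbarred entry `j ∈ {1,…,n}` is encoded as `j`, a barred entry `j̄` is
encoded as `2n+1-j` (so that `n̄ = n+1, …, 1̄ = 2n` and the total order of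
`J_B = J_C` is the numerical order), and the extra symbol `ovl(n+1)` of
types C and D is encoded as `0`. -/

/-- The box of type A. -/
def boxA (ι : ℕ → ℕ) (n : ℕ) (s : ℤ) (j : ℕ) : ℕ → ℚ :=
  xsj ι n (s + (PABC ι n j : ℤ)) j - xsj ι n (s + (PABC ι n (j - 1) : ℤ) + 1) (j - 1)

/-- The box of type B. -/
def boxB (ι : ℕ → ℕ) (n : ℕ) (s : ℤ) (e : ℕ) : ℕ → ℚ :=
  if e ≤ n then
    xsj ι n (s + (PABC ι n e : ℤ)) e - xsj ι n (s + (PABC ι n (e - 1) : ℤ) + 1) (e - 1)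
  else
    xsj ι n (s + (PABC ι n (2 * n - e) : ℤ) + (n : ℤ) - ((2 * n + 1 - e : ℕ) : ℤ) + 1)
        (2 * n - e)
      - xsj ι n (s + (PABC ι n (2 * n + 1 - e) : ℤ) + (n : ℤ) - ((2 * n + 1 - e : ℕ) : ℤ) + 1)
          (2 * n + 1 - e)

/-- The box of type C (`ovl(n+1)` encoded as `0`). -/
def boxC (ι : ℕ → ℕ) (n : ℕ) (s : ℤ) (e : ℕ) : ℕ → ℚ :=
  if e = 0 then xsj ι n (s + (PABC ι n n : ℤ)) n
  else if e < n then
    xsj ι n (s + (PABC ι n e : ℤ)) e - xsj ι n (s + (PABC ι n (e - 1) : ℤ) + 1) (e - 1)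
  else if e = n then
    (2 : ℚ) • xsj ι n (s + (PABC ι n n : ℤ)) n
      - xsj ι n (s + (PABC ι n (n - 1) : ℤ) + 1) (n - 1)
  else if e = n + 1 then
    xsj ι n (s + (PABC ι n (n - 1) : ℤ) + 1) (n - 1)
      - (2 : ℚ) • xsj ι n (s + (PABC ι n n : ℤ) + 1) n
  else
    xsj ι n (s + (PABC ι n (2 * n - e) : ℤ) + (n : ℤ) - ((2 * n + 1 - e : ℕ) : ℤ) + 1)
        (2 * n - e)
      - xsj ι n (s + (PABC ι n (2 * n + 1 - e) : ℤ) + (n : ℤ) - ((2 * n + 1 - e : ℕ) : ℤ) + 1)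
          (2 * n + 1 - e)

/-- The box of type D (`ovl(n+1)` encoded as `0`, `n̄` as `n+1`, `ovl(n-1)` as `n+2`). -/
def boxD (ι : ℕ → ℕ) (n : ℕ) (s : ℤ) (e : ℕ) : ℕ → ℚ :=
  if e = 0 then xsj ι n (s + (PD ι n n : ℤ)) n
  else if e ≤ n - 2 then
    xsj ι n (s + (PD ι n e : ℤ)) e - xsj ι n (s + (PD ι n (e - 1) : ℤ) + 1) (e - 1)
  else if e = n - 1 then
    xsj ι n (s + (PD ι n (n - 1) : ℤ)) (n - 1) + xsj ι n (s + (PD ι n n : ℤ)) n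
      - xsj ι n (s + (PD ι n (n - 2) : ℤ) + 1) (n - 2)
  else if e = n then
    xsj ι n (s + (PD ι n n : ℤ)) n - xsj ι n (s + (PD ι n (n - 1) : ℤ) + 1) (n - 1)
  else if e = n + 1 then
    xsj ι n (s + (PD ι n (n - 1) : ℤ)) (n - 1) - xsj ι n (s + (PD ι n n : ℤ) + 1) n
  else if e = n + 2 then
    xsj ι n (s + (PD ι n (n - 2) : ℤ) + 1) (n - 2)
      - xsj ι n (s + (PD ι n (n - 1) : ℤ) + 1) (n - 1)
      - xsj ι n (s + (PD ι n n : ℤ) + 1) n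
  else
    xsj ι n (s + (PD ι n (2 * n - e) : ℤ) + (n : ℤ) - ((2 * n + 1 - e : ℕ) : ℤ)) (2 * n - e)
      - xsj ι n (s + (PD ι n (2 * n + 1 - e) : ℤ) + (n : ℤ) - ((2 * n + 1 - e : ℕ) : ℤ))
          (2 * n + 1 - e)

/-- The column tableau `[j_1,…,j_k]_s = Σ_{i=1}^k box_{s+k-i}(j_i)`. -/
def tab (box : ℤ → ℕ → ℕ → ℚ) (s : ℤ) (k : ℕ) (j : ℕ → ℕ) : ℕ → ℚ :=
  ∑ i ∈ Finset.Icc 1 k, box (s + (k : ℤ) - (i : ℤ)) (j i)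

/-- The set `Tab_{A,ι}`. -/
def TabA (ι : ℕ → ℕ) (n : ℕ) : Set (ℕ → ℚ) :=
  { T | ∃ (k : ℕ) (s : ℤ) (j : ℕ → ℕ),
      1 ≤ k ∧ k ≤ n ∧
      (∀ i, 1 ≤ i → i ≤ k → 1 ≤ j i ∧ j i ≤ n + 1) ∧
      (∀ i, 1 ≤ i → i < k → j i < j (i + 1)) ∧
      1 - (PABC ι n k : ℤ) ≤ s ∧
      T = tab (boxA ι n) s k j }

/-- `|·|` on encoded entries of `J_B = J_C`. -/
def absJ (n e : ℕ) : ℕ := if e ≤ n then e else 2 * n + 1 - e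

/-- The set `Tab_{B,ι}`. -/
def TabB (ι : ℕ → ℕ) (n : ℕ) : Set (ℕ → ℚ) :=
  { T | ∃ (k : ℕ) (s : ℤ) (j : ℕ → ℕ),
      1 ≤ k ∧ k ≤ n ∧
      (∀ i, 1 ≤ i → i ≤ k → 1 ≤ j i ∧ j i ≤ 2 * n) ∧
      (∀ i, 1 ≤ i → i < k → j i < j (i + 1)) ∧
      (k = n → ∀ l m, 1 ≤ l → l < m → m ≤ k → absJ n (j l) ≠ absJ n (j m)) ∧
      1 - (PABC ι n k : ℤ) ≤ s ∧
      T = tab (boxB ι n) s k j }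

/-- Defining conditions of `Tab_{C,ι}` on the data `(k,s,j)`. -/
def TabCcond (ι : ℕ → ℕ) (n : ℕ) (k : ℕ) (s : ℤ) (j : ℕ → ℕ) : Prop :=
  (1 ≤ k ∧ k ≤ n - 1 ∧
    (∀ i, 1 ≤ i → i ≤ k → 1 ≤ j i ∧ j i ≤ 2 * n) ∧
    (∀ i, 1 ≤ i → i < k → j i < j (i + 1)) ∧
    1 - (PABC ι n k : ℤ) ≤ s)
  ∨
  (j 1 = 0 ∧ 1 ≤ k ∧ k ≤ n + 1 ∧
    (∀ i, 2 ≤ i → i ≤ k → n + 1 ≤ j i ∧ j i ≤ 2 * n) ∧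
    (∀ i, 2 ≤ i → i < k → j i < j (i + 1)) ∧
    1 - (PABC ι n n : ℤ) ≤ s)

/-- The set `Tab_{C,ι}`. -/
def TabC (ι : ℕ → ℕ) (n : ℕ) : Set (ℕ → ℚ) :=
  { T | ∃ k s j, TabCcond ι n k s j ∧ T = tab (boxC ι n) s k j }

/-- The partial order on (encoded) `J_D`: `a ≤ b` iff `a = b`, or `a < b` numerically and
`(a,b)` is not the incomparable pair `(n, n̄)`. -/
def leD (n a b : ℕ) : Prop := a = b ∨ (a < b ∧ ¬(a = n ∧ b = n + 1))

/-- Defining conditions of `Tab_{D,ι}` on the data `(k,s,j)`. -/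
def TabDcond (ι : ℕ → ℕ) (n : ℕ) (k : ℕ) (s : ℤ) (j : ℕ → ℕ) : Prop :=
  (1 ≤ k ∧ k ≤ n - 2 ∧
    (∀ i, 1 ≤ i → i ≤ k → 1 ≤ j i ∧ j i ≤ 2 * n) ∧
    (∀ i, 1 ≤ i → i < k → ¬ leD n (j (i + 1)) (j i)) ∧
    1 - (PD ι n k : ℤ) ≤ s)
  ∨
  (j 1 = 0 ∧ 1 ≤ k ∧ k ≤ n + 1 ∧
    (∀ i, 2 ≤ i → i ≤ k → n + 1 ≤ j i ∧ j i ≤ 2 * n) ∧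
    (∀ i, 2 ≤ i → i < k → j i < j (i + 1)) ∧
    (k % 2 = 0 → 1 - (PD ι n (n - 1) : ℤ) ≤ s) ∧
    (k % 2 = 1 → 1 - (PD ι n n : ℤ) ≤ s))

/-- The set `Tab_{D,ι}`. -/
def TabD (ι : ℕ → ℕ) (n : ℕ) : Set (ℕ → ℚ) :=
  { T | ∃ k s j, TabDcond ι n k s j ∧ T = tab (boxD ι n) s k j }

end

/-!
The orbit of `x_{r,n}` is a copy of the weights of the (co)spin representation. Its elements are
indexed by an integer `s` and a set `T ⊆ {1, …, n}`: in the form of `(s, T)` each letter `t` occurs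
with a single occurrence index, and with coefficient the `t`-th coordinate of the weight of `T`.
An operator `S_k` with `ι k = i` can therefore only do one of three things: fix the form, replace
the element `i + 1` of `T` by `i` (insert `n` if `i = n`) when the coefficient of `i` is positive,
or undo such a move when it is negative. Since `ι` is adapted, between two consecutive occurrences
of `i` each adjacent letter occurs exactly once, at an index governed by `p_{t,i}`, so subtracting
a multiple of `β_k` performs exactly the simple reflection in `i` together with the shift of the
occurrence index. All `T` are reached from `T = ∅`, whose form is `x_{r,n}` with `r = s + P(n)`.

On the tableau side `T` is the set of absolute values of the barred entries. A column is determined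
by its set of entries, and summing the boxes telescopes to the form of `(s, T)`.
-/

open Finset

section Occurrences

variable {ι : ℕ → ℕ} {i j : ℕ}

/-- The letter `i` occurs infinitely often in `ι`; this is what makes every `occPos ι i s` a genuine
position rather than the value `0` of an empty infimum. -/
def Recurs (ι : ℕ → ℕ) (i : ℕ) : Prop :=
  ∀ N, ∃ k, N ≤ k ∧ ι k = i

theorem occPos_succ_mem (hi : Recurs ι i) (s : ℕ) :
    occPos ι i s < occPos ι i (s + 1) ∧ ι (occPos ι i (s + 1)) = i :=
  Nat.sInf_mem (s := {k | occPos ι i s < k ∧ ι k = i}) (hi (occPos ι i s + 1))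

theorem occPos_strictMono (hi : Recurs ι i) : StrictMono (occPos ι i) :=
  strictMono_nat_of_lt_succ fun s => (occPos_succ_mem hi s).1

theorem apply_occPos (hi : Recurs ι i) {s : ℕ} (hs : 1 ≤ s) :
    ι (occPos ι i s) = i := by
  obtain ⟨s, rfl⟩ := Nat.exists_eq_add_of_le' hs
  exact (occPos_succ_mem hi s).2

theorem occPos_pos (hi : Recurs ι i) {s : ℕ} (hs : 1 ≤ s) :
    0 < occPos ι i s :=
  (Nat.zero_le _).trans_lt (occPos_strictMono hi hs)

theorem exists_eq_occPos (hi : Recurs ι i) {k : ℕ} (hk : 1 ≤ k) (hki : ι k = i) :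
    ∃ s, 1 ≤ s ∧ k = occPos ι i s := by
  have hex : ∃ s, k ≤ occPos ι i s := ⟨k, (occPos_strictMono hi).le_apply⟩
  obtain ⟨s, hs⟩ : ∃ s, Nat.find hex = s + 1 := by
    refine Nat.exists_eq_succ_of_ne_zero fun h0 => ?_
    have : k ≤ 0 := by simpa [h0, occPos] using Nat.find_spec hex
    omega
  have hlt : occPos ι i s < k := not_le.mp (Nat.find_min hex (by omega))
  refine ⟨s + 1, by omega, le_antisymm (hs ▸ Nat.find_spec hex) ?_⟩
  exact Nat.sInf_le ⟨hlt, hki⟩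

theorem kplus_occPos (hi : Recurs ι i) {s : ℕ} (hs : 1 ≤ s) :
    kplus ι (occPos ι i s) = occPos ι i (s + 1) := by
  rw [kplus, apply_occPos hi hs, occPos]

theorem kminus_occPos_succ (hi : Recurs ι i) {s : ℕ} (hs : 1 ≤ s) :
    kminus ι (occPos ι i (s + 1)) = occPos ι i s := by
  have hmono := occPos_strictMono hi
  rw [kminus, apply_occPos hi s.succ_pos]
  refine IsGreatest.csSup_eq
    ⟨⟨occPos_pos hi hs, hmono s.lt_succ_self, apply_occPos hi hs⟩, ?_⟩
  rintro l ⟨hl, hlt, hli⟩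
  obtain ⟨r, -, rfl⟩ := exists_eq_occPos hi hl hli
  exact hmono.monotone (Nat.lt_succ_iff.mp (hmono.lt_iff_lt.mp hlt))

/-- The subsequence of `ι` formed by the letters `i` and `j` alternates between them; this is the
condition that `Adapted` imposes on each pair of adjacent letters. -/
def Alternates (ι : ℕ → ℕ) (i j : ℕ) : Prop :=
  ∀ k l, 1 ≤ k → k < l → (ι k = i ∨ ι k = j) → (ι l = i ∨ ι l = j) →
    (∀ m, k < m → m < l → ι m ≠ i ∧ ι m ≠ j) → ι k ≠ ι l

theorem Alternates.symm (h : Alternates ι i j) : Alternates ι j i :=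
  fun k l hk hkl hik hil hm =>
    h k l hk hkl hik.symm hil.symm fun m hkm hml => (hm m hkm hml).symm

theorem Alternates.occPos_succ_lt (h : Alternates ι i j) (hi : Recurs ι i) {s t : ℕ}
    (hs : 1 ≤ s) (hts : occPos ι j t < occPos ι i s) :
    occPos ι j (t + 1) < occPos ι i (s + 1) := by
  have hi1 := apply_occPos hi hs
  have hi2 := apply_occPos hi s.succ_pos
  by_contra! hle
  refine h _ _ (occPos_pos hi hs) (occPos_strictMono hi s.lt_succ_self) (.inl hi1) (.inl hi2) ?_
    (hi1.trans hi2.symm)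
  refine fun m hm hm' => ⟨fun hmi => ?_, fun hmj => ?_⟩
  · exact (Nat.sInf_le (s := {k | occPos ι i s < k ∧ ι k = i}) ⟨hm, hmi⟩).not_gt hm'
  · exact (Nat.sInf_le (s := {k | occPos ι j t < k ∧ ι k = j}) ⟨hts.trans hm, hmj⟩).not_gt
      (hm'.trans_le hle)

theorem Alternates.occPos_interlace (h : Alternates ι i j) (hi : Recurs ι i) (hj : Recurs ι j)
    (hfirst : occPos ι i 1 < occPos ι j 1) (s : ℕ) :
    occPos ι j s < occPos ι i (s + 1) ∧ occPos ι i (s + 1) < occPos ι j (s + 1) := by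
  induction s with
  | zero => exact ⟨occPos_pos hi le_rfl, hfirst⟩
  | succ s ih =>
    have hlt := h.occPos_succ_lt hi s.succ_pos ih.1
    exact ⟨hlt, h.symm.occPos_succ_lt hj s.succ_pos ih.2⟩

theorem firstOcc_ne (hij : i ≠ j) (hi : Recurs ι i) (hj : Recurs ι j) :
    firstOcc ι i ≠ firstOcc ι j := fun h =>
  hij <| (apply_occPos hi le_rfl).symm.trans <| (congrArg ι h).trans (apply_occPos hj le_rfl)

theorem pval_add_pval_swap (hij : i ≠ j) (hi : Recurs ι i) (hj : Recurs ι j) :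
    pval ι i j + pval ι j i = 1 := by
  have := firstOcc_ne hij hi hj
  grind [pval]

theorem pval_le_one : pval ι i j ≤ 1 := by
  grind [pval]

theorem Alternates.occPos_mem_Ioo_iff (h : Alternates ι i j) (hij : i ≠ j) (hi : Recurs ι i)
    (hj : Recurs ι j) {s t : ℕ} (hs : 1 ≤ s) :
    occPos ι j t ∈ Ioo (occPos ι i s) (occPos ι i (s + 1)) ↔ t = s + pval ι j i := by
  have hmono := occPos_strictMono hj
  obtain ⟨s, rfl⟩ := Nat.exists_eq_add_of_le' hs
  have between {r : ℕ} (h1 : occPos ι j r < occPos ι i (s + 1))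
      (h2 : occPos ι i (s + 1) < occPos ι j (r + 1)) (h3 : occPos ι j (r + 1) < occPos ι i (s + 2))
      (h4 : occPos ι i (s + 2) < occPos ι j (r + 2)) :
      occPos ι j t ∈ Ioo (occPos ι i (s + 1)) (occPos ι i (s + 2)) ↔ t = r + 1 := by
    rw [mem_Ioo]
    refine ⟨fun ⟨hlt, hgt⟩ => ?_, by rintro rfl; exact ⟨h2, h3⟩⟩
    have := hmono.lt_iff_lt.mp (h1.trans hlt)
    have := hmono.lt_iff_lt.mp (hgt.trans h4)
    omega
  rcases lt_or_gt_of_ne (firstOcc_ne hij hi hj) with hfirst | hfirst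
  · have hlace := h.occPos_interlace hi hj hfirst
    rw [pval, if_neg hfirst.not_gt]
    exact between (hlace s).1 (hlace s).2 (hlace (s + 1)).1 (hlace (s + 1)).2
  · have hlace := h.symm.occPos_interlace hj hi hfirst
    rw [pval, if_pos hfirst]
    exact between (hlace s).2 (hlace (s + 1)).1 (hlace (s + 1)).2 (hlace (s + 2)).1

end Occurrences

section DoubleIndex

variable {n : ℕ} {ι : ℕ → ℕ} {A : ℕ → ℕ → ℤ}

theorem Admissible.recurs (hadm : Admissible n ι) {i : ℕ} (hi : i ∈ Icc 1 n) : Recurs ι i :=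
  hadm.2.2 i (mem_Icc.mp hi).1 (mem_Icc.mp hi).2

theorem Admissible.exists_eq_occPos (hadm : Admissible n ι) {k : ℕ} (hk : 1 ≤ k) :
    ∃ i ∈ Icc 1 n, ∃ m, 1 ≤ m ∧ k = occPos ι i m := by
  have hi : ι k ∈ Icc 1 n := mem_Icc.mpr (hadm.1 k hk)
  exact ⟨ι k, hi, _root_.exists_eq_occPos (hadm.recurs hi) hk rfl⟩

theorem xsj_index_zero (s : ℤ) : xsj ι n s 0 = 0 := by
  simp [xsj]

theorem xsj_natCast {i s : ℕ} (hi : i ∈ Icc 1 n) (hs : 1 ≤ s) :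
    xsj ι n s i = xc (occPos ι i s) := by
  rw [mem_Icc] at hi
  rw [xsj, if_pos ⟨by exact_mod_cast hs, hi⟩, Int.toNat_natCast]

theorem xsj_apply_occPos (hadm : Admissible n ι) {i t m : ℕ} (hi : i ∈ Icc 1 n) (ht : t ∈ Icc 1 n)
    (hm : 1 ≤ m) (q : ℤ) : xsj ι n q t (occPos ι i m) = if t = i ∧ q = m then 1 else 0 := by
  by_cases hq : 1 ≤ q
  · lift q to ℕ using by omega
    norm_cast at hq
    rw [xsj_natCast ht hq, xc]
    refine if_congr ⟨fun h => ?_, by rintro ⟨rfl, h⟩; rw [Nat.cast_inj.mp h]⟩ rfl rfl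
    have hti : t = i := by
      rw [← apply_occPos (hadm.recurs hi) hm, h, apply_occPos (hadm.recurs ht) hq]
    subst hti
    exact ⟨rfl, congrArg _ ((occPos_strictMono (hadm.recurs hi)).injective h.symm)⟩
  · rw [xsj, if_neg (hq ·.1), if_neg (by omega), Pi.zero_apply]

theorem Adapted.sum_Ioo_occPos (hadm : Admissible n ι) (had : Adapted n A ι) {i m : ℕ}
    (hi : i ∈ Icc 1 n) (hm : 1 ≤ m) :
    ∑ k ∈ Ioo (occPos ι i m) (occPos ι i (m + 1)), (A i (ι k) : ℚ) • xc k =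
      ∑ t ∈ (Icc 1 n).erase i, (A i t : ℚ) • xsj ι n (m + pval ι t i) t := by
  have maps : ∀ k ∈ Ioo (occPos ι i m) (occPos ι i (m + 1)), ι k ∈ (Icc 1 n).erase i := by
    intro k hk
    rw [mem_Ioo] at hk
    refine mem_erase.mpr ⟨fun hki => ?_, mem_Icc.mpr (hadm.1 k (by omega))⟩
    exact (Nat.sInf_le (s := {k | occPos ι i m < k ∧ ι k = i}) ⟨hk.1, hki⟩).not_gt hk.2
  rw [← sum_fiberwise_of_maps_to maps]
  refine sum_congr rfl fun t ht => ?_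
  obtain ⟨hti, ht⟩ := mem_erase.mp ht
  rw [sum_congr rfl fun k hk => by rw [(mem_filter.mp hk).2], ← smul_sum]
  by_cases hA : A i t = 0
  · simp [hA]
  have halt : Alternates ι i t :=
    had i t (mem_Icc.mp hi).1 (mem_Icc.mp hi).2 (mem_Icc.mp ht).1 (mem_Icc.mp ht).2 hti.symm hA
  have fiber : {k ∈ Ioo (occPos ι i m) (occPos ι i (m + 1)) | ι k = t} =
      {occPos ι t (m + pval ι t i)} := by
    have iff_eq {r : ℕ} :=
      halt.occPos_mem_Ioo_iff hti.symm (hadm.recurs hi) (hadm.recurs ht) (t := r) hm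
    ext k
    rw [mem_filter, mem_singleton]
    refine ⟨fun ⟨hk, hkt⟩ => ?_, ?_⟩
    · obtain ⟨r, -, rfl⟩ := exists_eq_occPos (hadm.recurs ht) (by rw [mem_Ioo] at hk; omega) hkt
      rw [iff_eq.mp hk]
    · rintro rfl
      exact ⟨iff_eq.mpr rfl, apply_occPos (hadm.recurs ht) (by omega)⟩
  rw [fiber, sum_singleton, ← xsj_natCast ht (by omega), Nat.cast_add]

theorem Adapted.betasj_eq (hadm : Admissible n ι) (had : Adapted n A ι) {i : ℕ} {q : ℤ}
    (hi : i ∈ Icc 1 n) (hq : 1 ≤ q) :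
    betasj A ι q i = xsj ι n q i + xsj ι n (q + 1) i +
      ∑ t ∈ (Icc 1 n).erase i, (A i t : ℚ) • xsj ι n (q + pval ι t i) t := by
  lift q to ℕ using by omega
  norm_cast at hq
  have hrec := hadm.recurs hi
  rw [betasj, Int.toNat_natCast, beta, if_neg (occPos_pos hrec hq).ne', kplus_occPos hrec hq,
    apply_occPos hrec hq, had.sum_Ioo_occPos hadm hi hq, xsj_natCast hi hq, ← Nat.cast_succ,
    xsj_natCast hi q.succ_pos, add_right_comm]

end DoubleIndex

section SpinForms

/-- The features of the Cartan matrices of types `B_n` (`w = 2`) and `C_n` (`w = 1`) that govern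
the orbit of `x_{r,n}`: a chain of adjacent letters whose only multiple edge joins `n - 1` and `n`.
Here `w` is the coefficient with which the letters other than `n` occur in that orbit. -/
structure IsCartanBC (n : ℕ) (w : ℤ) (A : ℕ → ℕ → ℤ) : Prop where
  pos : 0 < w
  far : ∀ {i j}, i ≠ j → i + 1 ≠ j → j + 1 ≠ i → A i j = 0
  lower : ∀ {i}, 1 ≤ i → i + 1 ≤ n → A (i + 1) i = if i + 1 = n then -w else -1
  upper : ∀ {i}, 1 ≤ i → i + 1 ≤ n → w * A i (i + 1) = if i + 1 = n then -2 else -w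

theorem isCartanBC_cartanB (n : ℕ) : IsCartanBC n 2 (cartanB n) := by
  constructor <;> grind [cartanB]

theorem isCartanBC_cartanC (n : ℕ) : IsCartanBC n 1 (cartanC n) := by
  constructor <;> grind [cartanC]

/-- The occurrence index of the letter `t` in the spin form with parameters `s` and `T`. -/
noncomputable def level (ι : ℕ → ℕ) (n : ℕ) (s : ℤ) (T : Finset ℕ) (t : ℕ) : ℤ :=
  s + PABC ι n t + n - t + Nat.count (· ∈ T) (t + 1)

/-- The coefficient of the letter `t` in the spin form of `T`: the `t`-th coordinate of a weight of
the representation in which the highest weight `T = ∅` is the `n`-th fundamental weight. -/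
def spinCoeff (n : ℕ) (w : ℤ) (T : Finset ℕ) (t : ℕ) : ℤ :=
  (if t = n then 1 else 0) + (if t + 1 ∈ T then w else 0) -
    (if t ∈ T then if t = n then 2 else w else 0)

/-- The element of the orbit of `x_{r,n}` attached to the set `T ⊆ {1, …, n}` of absolute values of
the barred entries of the corresponding tableau: each letter `t` has coefficient
`spinCoeff n w T t` and is placed at its occurrence number `level ι n s T t`. -/
noncomputable def spinForm (ι : ℕ → ℕ) (n : ℕ) (w s : ℤ) (T : Finset ℕ) : ℕ → ℚ :=
  ∑ t ∈ Icc 1 n, (spinCoeff n w T t : ℚ) • xsj ι n (level ι n s T t) t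

/-- `T'` is obtained from `T` by moving the element `i + 1` to `i`, or by inserting `n` if
`i = n`. These are the moves on barred entries by which the operators `S_k` act on spin forms. -/
structure Advance (n i : ℕ) (T T' : Finset ℕ) : Prop where
  subset : T ⊆ Icc 1 n
  index_mem : i ∈ Icc 1 n
  notMem : i ∉ T
  eq_or_mem : i = n ∨ i + 1 ∈ T
  eq_insert : T' = insert i (T.erase (i + 1))

variable {n : ℕ} {ι : ℕ → ℕ} {A : ℕ → ℕ → ℤ} {w s : ℤ} {i t : ℕ} {T T' : Finset ℕ}

theorem Advance.mem_iff (h : Advance n i T T') : t ∈ T' ↔ t = i ∨ t ∈ T ∧ t ≠ i + 1 := by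
  rw [h.eq_insert, mem_insert, mem_erase, and_comm]

theorem Advance.subset_right (h : Advance n i T T') : T' ⊆ Icc 1 n := fun _ ht =>
  (h.mem_iff.mp ht).elim (· ▸ h.index_mem) fun ht => h.subset ht.1

theorem Advance.count_eq (h : Advance n i T T') {m : ℕ} (hm : m ≤ n + 1) :
    Nat.count (· ∈ T') m = Nat.count (· ∈ T) m + if m = i + 1 then 1 else 0 := by
  have := h.notMem
  have := h.eq_or_mem
  induction m with
  | zero => simp
  | succ m ih => grind [h.mem_iff (t := m)]

theorem Advance.level_eq (h : Advance n i T T') (ht : t ≤ n) :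
    level ι n s T' t = level ι n s T t + if t = i then 1 else 0 := by
  rw [level, level, h.count_eq (by omega)]
  grind

theorem Advance.spinCoeff_self (h : Advance n i T T') :
    spinCoeff n w T i = if i = n then 1 else w := by
  have hsub := @h.subset (i + 1)
  have := h.notMem
  have := h.eq_or_mem
  grind [spinCoeff]

theorem Advance.spinCoeff_pos (h : Advance n i T T') (hw : 0 < w) : 0 < spinCoeff n w T i := by
  rw [h.spinCoeff_self]
  split <;> omega

theorem Advance.spinCoeff_eq (h : Advance n i T T') (hA : IsCartanBC n w A)
    (ht : t ∈ (Icc 1 n).erase i) :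
    spinCoeff n w T' t = spinCoeff n w T t - spinCoeff n w T i * A i t := by
  rw [h.spinCoeff_self]
  have := h.notMem
  have := h.eq_or_mem
  have := h.index_mem
  have := @h.subset (n + 1)
  have := h.mem_iff (t := t)
  have := h.mem_iff (t := t + 1)
  rcases eq_or_ne (t + 1) i with rfl | h1
  · have := hA.lower (i := t)
    grind [spinCoeff]
  rcases eq_or_ne (i + 1) t with rfl | h2
  · have := hA.upper (i := i)
    grind [spinCoeff]
  · have := hA.far (i := i) (j := t)
    grind [spinCoeff]

theorem Advance.spinCoeff_neg (h : Advance n i T T') :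
    spinCoeff n w T' i = -spinCoeff n w T i := by
  rw [h.spinCoeff_self]
  have := h.mem_iff (t := i)
  have := h.mem_iff (t := i + 1)
  grind [spinCoeff]

theorem exists_advance_of_spinCoeff_pos (hw : 0 < w) (hT : T ⊆ Icc 1 n) (hi : i ∈ Icc 1 n)
    (h : 0 < spinCoeff n w T i) : ∃ T', Advance n i T T' := by
  have := @hT (n + 1)
  exact ⟨_, hT, hi, by grind [spinCoeff], by grind [spinCoeff], rfl⟩

theorem exists_advance_of_spinCoeff_neg (hw : 0 < w) (hT : T ⊆ Icc 1 n) (hi : i ∈ Icc 1 n)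
    (h : spinCoeff n w T i < 0) : ∃ T₀, Advance n i T₀ T := by
  have hmem : i ∈ T := by grind [spinCoeff]
  have hsucc : i + 1 ∉ T := by grind [spinCoeff]
  by_cases hin : i = n
  · exact ⟨T.erase i, by grind, hi, by grind, .inl hin, by grind⟩
  · exact ⟨insert (i + 1) (T.erase i), by grind, hi, by grind, by grind, by grind⟩

theorem PABC_succ (ht : 1 ≤ t) (htn : t + 1 ≤ n) :
    PABC ι n (t + 1) = PABC ι n t + pval ι (t + 1) t := by
  rw [PABC, PABC, if_pos htn, if_pos (by omega), sum_Icc_succ_top (by omega), Nat.add_sub_cancel]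

theorem PABC_add_le (ht : 1 ≤ t) (htn : t ≤ n) : PABC ι n n + t ≤ PABC ι n t + n := by
  induction htn using Nat.decreasingInduction with
  | self => rfl
  | of_succ t htn ih =>
    have := PABC_succ (ι := ι) ht htn
    have := pval_le_one (ι := ι) (i := t + 1) (j := t)
    have := ih (by omega)
    omega

theorem one_le_level (hs : 1 - (PABC ι n n : ℤ) ≤ s) (ht : t ∈ Icc 1 n) :
    1 ≤ level ι n s T t := by
  rw [mem_Icc] at ht
  have := PABC_add_le (ι := ι) ht.1 ht.2
  rw [level]
  omega

theorem Advance.level_eq_add_pval (h : Advance n i T T') (hadm : Admissible n ι)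
    (hA : IsCartanBC n w A) (ht : t ∈ (Icc 1 n).erase i) (hAt : A i t ≠ 0) :
    level ι n s T t = level ι n s T i + pval ι t i := by
  have hi := h.index_mem
  have hmem := h.eq_or_mem
  have hnot := h.notMem
  obtain ⟨hti, htn⟩ := mem_erase.mp ht
  have hswap := pval_add_pval_swap hti (hadm.recurs htn) (hadm.recurs hi)
  rw [mem_Icc] at hi htn
  have hadj : t + 1 = i ∨ i + 1 = t := by
    by_contra! hne
    exact hAt (hA.far hti.symm hne.2 hne.1)
  rcases hadj with rfl | rfl
  · have := PABC_succ (ι := ι) htn.1 hi.2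
    rw [level, level, Nat.count_succ _ (t + 1), if_neg hnot]
    omega
  · have := PABC_succ (ι := ι) hi.1 htn.2
    rw [level, level, Nat.count_succ _ (i + 1), if_pos (hmem.resolve_left (by omega))]
    omega

theorem Advance.spinForm_eq (h : Advance n i T T') (hadm : Admissible n ι) (had : Adapted n A ι)
    (hA : IsCartanBC n w A) (hs : 1 - (PABC ι n n : ℤ) ≤ s) :
    spinForm ι n w s T' =
      spinForm ι n w s T - (spinCoeff n w T i : ℚ) • betasj A ι (level ι n s T i) i := by
  have hi := h.index_mem
  have other : ∀ t ∈ (Icc 1 n).erase i,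
      (spinCoeff n w T' t : ℚ) • xsj ι n (level ι n s T' t) t =
        (spinCoeff n w T t : ℚ) • xsj ι n (level ι n s T t) t -
          (spinCoeff n w T i : ℚ) • (A i t : ℚ) • xsj ι n (level ι n s T i + pval ι t i) t := by
    intro t ht
    obtain ⟨hti, htn⟩ := mem_erase.mp ht
    rw [h.spinCoeff_eq hA ht, h.level_eq (mem_Icc.mp htn).2, if_neg hti, add_zero]
    by_cases hAt : A i t = 0
    · simp [hAt]
    · rw [h.level_eq_add_pval hadm hA ht hAt]
      push_cast
      module
  rw [spinForm, spinForm, ← add_sum_erase _ _ hi, ← add_sum_erase _ _ hi, sum_congr rfl other,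
    sum_sub_distrib, ← smul_sum, had.betasj_eq hadm hi (one_le_level hs hi), h.spinCoeff_neg,
    h.level_eq (mem_Icc.mp hi).2, if_pos rfl]
  push_cast
  module

theorem spinForm_apply_occPos (hadm : Admissible n ι) {m : ℕ} (hi : i ∈ Icc 1 n) (hm : 1 ≤ m) :
    spinForm ι n w s T (occPos ι i m) =
      if level ι n s T i = m then (spinCoeff n w T i : ℚ) else 0 := by
  have single : ∀ t ∈ Icc 1 n, t ≠ i →
      ((spinCoeff n w T t : ℚ) • xsj ι n (level ι n s T t) t) (occPos ι i m) = 0 := by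
    intro t ht hti
    simp [xsj_apply_occPos hadm hi ht hm, hti]
  rw [spinForm, Finset.sum_apply, sum_eq_single_of_mem i hi single, Pi.smul_apply,
    xsj_apply_occPos hadm hi hi hm, smul_eq_mul]
  simp

theorem Advance.Sop_spinForm (h : Advance n i T T') (hadm : Admissible n ι) (had : Adapted n A ι)
    (hA : IsCartanBC n w A) (hs : 1 - (PABC ι n n : ℤ) ≤ s) {m : ℕ}
    (hm : level ι n s T i = m) :
    Sop A ι (occPos ι i m) (spinForm ι n w s T) = spinForm ι n w s T' := by
  have hm1 : 1 ≤ m := by exact_mod_cast hm ▸ one_le_level hs h.index_mem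
  have hpos : (0 : ℚ) < spinCoeff n w T i := by exact_mod_cast h.spinCoeff_pos hA.pos
  rw [Sop, spinForm_apply_occPos hadm h.index_mem hm1, if_pos hm, if_pos hpos,
    h.spinForm_eq hadm had hA hs, betasj, hm, Int.toNat_natCast]

theorem Advance.Sop_spinForm_succ (h : Advance n i T T') (hadm : Admissible n ι)
    (had : Adapted n A ι) (hA : IsCartanBC n w A) (hs : 1 - (PABC ι n n : ℤ) ≤ s) {m : ℕ}
    (hm : level ι n s T i = m) :
    Sop A ι (occPos ι i (m + 1)) (spinForm ι n w s T') = spinForm ι n w s T := by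
  have hm1 : 1 ≤ m := by exact_mod_cast hm ▸ one_le_level hs h.index_mem
  have hpos : (0 : ℚ) < spinCoeff n w T i := by exact_mod_cast h.spinCoeff_pos hA.pos
  have hlevel : level ι n s T' i = (m + 1 : ℕ) := by
    rw [h.level_eq (mem_Icc.mp h.index_mem).2, if_pos rfl, hm, Nat.cast_succ]
  rw [Sop, spinForm_apply_occPos hadm h.index_mem m.succ_pos, if_pos hlevel, h.spinCoeff_neg,
    Int.cast_neg, if_neg (by linarith), kminus_occPos_succ (hadm.recurs h.index_mem) hm1,
    h.spinForm_eq hadm had hA hs, betasj, hm, Int.toNat_natCast]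
  module

theorem exists_Sop_spinForm (hadm : Admissible n ι) (had : Adapted n A ι)
    (hA : IsCartanBC n w A) (hs : 1 - (PABC ι n n : ℤ) ≤ s) (hT : T ⊆ Icc 1 n) {k : ℕ}
    (hk : 1 ≤ k) :
    ∃ T' ⊆ Icc 1 n, Sop A ι k (spinForm ι n w s T) = spinForm ι n w s T' := by
  obtain ⟨i, hi, m, hm, rfl⟩ := hadm.exists_eq_occPos hk
  by_cases hzero : spinForm ι n w s T (occPos ι i m) = 0
  · exact ⟨T, hT, by simp [Sop, hzero]⟩
  have happly := spinForm_apply_occPos (w := w) (s := s) (T := T) hadm hi hm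
  have hlevel : level ι n s T i = m := by
    by_contra hne
    exact hzero (happly.trans (if_neg hne))
  have hcoeff : spinCoeff n w T i ≠ 0 := fun h0 => hzero (by simp [happly, h0])
  rcases hcoeff.lt_or_gt with hneg | hpos
  · obtain ⟨T₀, h⟩ := exists_advance_of_spinCoeff_neg hA.pos hT hi hneg
    rw [h.level_eq (mem_Icc.mp hi).2, if_pos rfl] at hlevel
    obtain ⟨m, rfl⟩ := Nat.exists_eq_add_of_le' hm
    exact ⟨T₀, h.subset, h.Sop_spinForm_succ hadm had hA hs (by push_cast at hlevel; omega)⟩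
  · obtain ⟨T', h⟩ := exists_advance_of_spinCoeff_pos hA.pos hT hi hpos
    exact ⟨T', h.subset_right, h.Sop_spinForm hadm had hA hs hlevel⟩

theorem spinForm_empty (hn : 1 ≤ n) : spinForm ι n w s ∅ = xsj ι n (s + PABC ι n n) n := by
  rw [spinForm, sum_eq_single_of_mem n (by simpa)]
  · simp [spinCoeff, level, Nat.count_false]
  · intro t _ ht
    simp [spinCoeff, ht]

theorem advance_induction {p : Finset ℕ → Prop} (empty : p ∅)
    (advance : ∀ {i T T'}, Advance n i T T' → p T → p T') (hT : T ⊆ Icc 1 n) : p T := by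
  induction T using Finset.induction_on_max with
  | empty => exact empty
  | insert a T hlt ih =>
    have hmem : ∀ i, a ≤ i → i ∉ T := fun i hai hi => (hlt i hi).not_ge hai
    have han : a ∈ Icc 1 n := hT (mem_insert_self a T)
    have hTn : T ⊆ Icc 1 n := (subset_insert a T).trans hT
    rw [mem_Icc] at han
    obtain ⟨ha1, han⟩ := han
    have moves : ∀ i, i ≤ n → a ≤ i → p (insert i T) := by
      intro i hin hai
      induction hin using Nat.decreasingInduction with
      | self =>
        refine advance (i := n) ⟨hTn, by simp; omega, hmem n han, .inl rfl, ?_⟩ (ih hTn)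
        rw [erase_eq_of_notMem (hmem _ (by omega))]
      | of_succ i hin ih' =>
        refine advance (i := i) ⟨?_, by simp; omega, ?_, .inr (mem_insert_self _ _), ?_⟩
          (ih' (by omega))
        · exact insert_subset (by simp; omega) hTn
        · simpa using hmem i hai
        · rw [erase_insert (hmem _ (by omega))]
    exact moves a han le_rfl

theorem xiMemFrom_iff_spinForm (hadm : Admissible n ι) (had : Adapted n A ι)
    (hA : IsCartanBC n w A) {φ : ℕ → ℚ} :
    XiMemFrom A ι {ψ | ∃ r, 1 ≤ r ∧ ψ = xc (occPos ι n r)} φ ↔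
      ∃ s T, 1 - (PABC ι n n : ℤ) ≤ s ∧ T ⊆ Icc 1 n ∧ φ = spinForm ι n w s T := by
  have hn : 1 ≤ n := (hadm.1 1 le_rfl).1.trans (hadm.1 1 le_rfl).2
  have hnn : n ∈ Icc 1 n := mem_Icc.mpr ⟨hn, le_rfl⟩
  constructor
  · intro h
    induction h with
    | base φ h =>
      obtain ⟨r, hr, rfl⟩ := h
      refine ⟨r - PABC ι n n, ∅, by omega, empty_subset _, ?_⟩
      rw [spinForm_empty hn, sub_add_cancel, xsj_natCast hnn hr]
    | step k hk φ _ ih =>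
      obtain ⟨s, T, hs, hT, rfl⟩ := ih
      obtain ⟨T', hT', heq⟩ := exists_Sop_spinForm hadm had hA hs hT hk
      exact ⟨s, T', hs, hT', heq⟩
  · rintro ⟨s, T, hs, hT, rfl⟩
    refine advance_induction (p := fun T => XiMemFrom A ι _ (spinForm ι n w s T)) ?_ ?_ hT
    · obtain ⟨r, hr⟩ := Int.eq_ofNat_of_zero_le (a := s + PABC ι n n) (by omega)
      have hr1 : 1 ≤ r := by omega
      exact .base _ ⟨r, hr1, by rw [spinForm_empty hn, hr, xsj_natCast hnn hr1]⟩
    · intro i T T' h ih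
      have hlevel := one_le_level (T := T) hs h.index_mem
      obtain ⟨m, hm⟩ := Int.eq_ofNat_of_zero_le (zero_le_one.trans hlevel)
      rw [← h.Sop_spinForm hadm had hA hs hm]
      exact .step _ (occPos_pos (hadm.recurs h.index_mem) (by omega)) _ ih

end SpinForms

section Columns

/-- The column tableau whose set of entries is `U`: the entry `u` lies above the entries greater
than `u`, whose number is therefore the shift of its box. -/
def columnForm (box : ℤ → ℕ → ℕ → ℚ) (s : ℤ) (U : Finset ℕ) : ℕ → ℚ :=
  ∑ u ∈ U, box (s + #{v ∈ U | u < v}) u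

variable {box : ℤ → ℕ → ℕ → ℚ} {s : ℤ}

theorem columnForm_union {U V : Finset ℕ} (h : ∀ u ∈ U, ∀ v ∈ V, u < v) :
    columnForm box s (U ∪ V) = columnForm box (s + #V) U + columnForm box s V := by
  have hdisj : Disjoint U V := disjoint_left.mpr fun u hu hv => (h u hu u hv).false
  rw [columnForm, sum_union hdisj]
  congr 1
  · refine sum_congr rfl fun u hu => ?_
    rw [filter_union, filter_true_of_mem (h u hu),
      card_union_of_disjoint (hdisj.mono_left (filter_subset _ _)), Nat.cast_add, add_comm (#_ : ℤ),
      add_assoc]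
  · refine sum_congr rfl fun v hv => ?_
    rw [filter_union, filter_false_of_mem fun u hu => (h u hu v hv).le.not_gt, empty_union]

theorem columnForm_image {T : Finset ℕ} {f : ℕ → ℕ} (hf : StrictAntiOn f T) :
    columnForm box s (T.image f) = ∑ t ∈ T, box (s + Nat.count (· ∈ T) t) (f t) := by
  rw [columnForm, sum_image hf.injOn]
  refine sum_congr rfl fun t ht => ?_
  have below : {r ∈ T | f t < f r} = {r ∈ range t | r ∈ T} := by
    ext r
    simp only [mem_filter, mem_range]
    exact ⟨fun ⟨hr, h⟩ => ⟨(hf.lt_iff_gt ht hr).mp h, hr⟩,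
      fun ⟨h, hr⟩ => ⟨hr, (hf.lt_iff_gt ht hr).mpr h⟩⟩
  rw [filter_image, below, card_image_of_injOn, Nat.count_eq_card_filter_range]
  exact hf.injOn.mono fun r hr => (mem_filter.mp hr).2

theorem tab_eq_columnForm {k : ℕ} {j : ℕ → ℕ} (hj : StrictMonoOn j (Icc 1 k : Finset ℕ)) :
    tab box s k j = columnForm box s ((Icc 1 k).image j) := by
  rw [tab, columnForm, sum_image hj.injOn]
  refine sum_congr rfl fun i hi => ?_
  have below : {r ∈ Icc 1 k | j i < j r} = Ioc i k := by
    ext r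
    have := mem_Icc.mp hi
    rw [mem_filter, mem_Ioc, mem_Icc]
    exact ⟨fun ⟨hr, h⟩ => ⟨(hj.lt_iff_lt hi (mem_Icc.mpr hr)).mp h, hr.2⟩, fun ⟨h, hr⟩ =>
      ⟨⟨by omega, hr⟩, (hj.lt_iff_lt hi (mem_Icc.mpr ⟨by omega, hr⟩)).mpr h⟩⟩
  rw [filter_image, below, card_image_of_injOn (hj.injOn.mono _), Nat.card_Ioc,
    Nat.cast_sub (mem_Icc.mp hi).2, add_sub_assoc]
  exact fun r hr => mem_Icc.mpr (by have := mem_Icc.mp hi; rw [coe_Ioc, Set.mem_Ioc] at hr; omega)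

theorem exists_strictMonoOn_image_eq (U : Finset ℕ) :
    ∃ j : ℕ → ℕ, StrictMonoOn j (Icc 1 #U : Finset ℕ) ∧ (Icc 1 #U).image j = U := by
  have hcard (hfin : (Set.ofPred (· ∈ U)).Finite) : #hfin.toFinset = #U := by simp
  have hmono : StrictMonoOn (fun i => Nat.nth (· ∈ U) (i - 1)) (Icc 1 #U : Finset ℕ) := by
    intro a ha b hb hab
    rw [coe_Icc, Set.mem_Icc] at ha hb
    exact Nat.nth_lt_nth' (by omega) fun hfin => by rw [hcard]; omega
  refine ⟨_, hmono, eq_of_subset_of_card_le (image_subset_iff.mpr fun i hi => ?_) ?_⟩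
  · rw [mem_Icc] at hi
    exact Nat.nth_mem (p := (· ∈ U)) _ fun hfin => by rw [hcard]; omega
  · rw [card_image_of_injOn hmono.injOn, Nat.card_Icc, Nat.add_sub_cancel]

theorem strictMonoOn_Icc_one_iff {k : ℕ} {j : ℕ → ℕ} :
    StrictMonoOn j (Icc 1 k : Finset ℕ) ↔ ∀ i, 1 ≤ i → i < k → j i < j (i + 1) := by
  rw [coe_Icc]
  refine ⟨fun h i hi hik => h ⟨hi, hik.le⟩ ⟨by omega, hik⟩ i.lt_succ_self, fun h => ?_⟩
  exact strictMonoOn_of_lt_add_one Set.ordConnected_Icc fun i _ hi hi' => h i hi.1 hi'.2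

theorem exists_tab_iff {k : ℕ} {φ : ℕ → ℚ} (P : Finset ℕ → Prop) :
    (∃ j : ℕ → ℕ, StrictMonoOn j (Icc 1 k : Finset ℕ) ∧ P ((Icc 1 k).image j) ∧
      φ = tab box s k j) ↔ ∃ U, #U = k ∧ P U ∧ φ = columnForm box s U := by
  constructor
  · rintro ⟨j, hj, hP, rfl⟩
    refine ⟨_, ?_, hP, tab_eq_columnForm hj⟩
    rw [card_image_of_injOn hj.injOn, Nat.card_Icc, Nat.add_sub_cancel]
  · rintro ⟨U, rfl, hP, rfl⟩
    obtain ⟨j, hj, himage⟩ := exists_strictMonoOn_image_eq U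
    exact ⟨j, hj, himage.symm ▸ hP, by rw [tab_eq_columnForm hj, himage]⟩

end Columns

section Tableaux

/-- The set of entries of the type `B` tableau with `n` rows attached to `T ⊆ {1, …, n}`: the
elements of `T` occur barred (`t̄` being encoded as `2n + 1 - t`), the others unbarred. -/
def columnB (n : ℕ) (T : Finset ℕ) : Finset ℕ :=
  (Icc 1 n \ T) ∪ T.image (2 * n + 1 - ·)

/-- The set of entries of the type `C` tableau attached to `T ⊆ {1, …, n}`: the extra letter
`ovl(n+1)`, encoded as `0`, and the barred elements of `T`. -/
def columnC (n : ℕ) (T : Finset ℕ) : Finset ℕ :=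
  {0} ∪ T.image (2 * n + 1 - ·)

variable {n : ℕ} {ι : ℕ → ℕ} {w s : ℤ} {t : ℕ} {T : Finset ℕ}

theorem sum_Icc_ite_succ_mem {M : Type*} [AddCommGroup M] (hn : 1 ≤ n) (hT : T ⊆ Icc 1 n)
    {f : ℕ → M} (hf : f 0 = 0) :
    ∑ t ∈ Icc 1 n, (if t + 1 ∈ T then f t else 0) = ∑ t ∈ T, f (t - 1) := by
  have hn1 : n + 1 ∉ T := fun h => by simpa using hT h
  have shift := sum_Icc_sub hn fun t => if t ∈ T then f (t - 1) else 0
  rw [sum_sub_distrib, sum_ite_mem, inter_eq_right.mpr hT, if_neg hn1, Nat.sub_self, hf, ite_self,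
    sub_zero, sub_eq_zero] at shift
  exact shift

theorem spinForm_eq_add_sum (hn : 1 ≤ n) (hT : T ⊆ Icc 1 n) :
    spinForm ι n w s T = xsj ι n (level ι n s T n) n +
      ∑ t ∈ T, ((w : ℚ) • xsj ι n (level ι n s T (t - 1)) (t - 1) -
        (if t = n then 2 else w : ℚ) • xsj ι n (level ι n s T t) t) := by
  have split_coeff (t : ℕ) : (spinCoeff n w T t : ℚ) • xsj ι n (level ι n s T t) t =
      (if t = n then xsj ι n (level ι n s T t) t else 0) +
        (if t + 1 ∈ T then (w : ℚ) • xsj ι n (level ι n s T t) t else 0) -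
        (if t ∈ T then (if t = n then 2 else w : ℚ) • xsj ι n (level ι n s T t) t else 0) := by
    rw [spinCoeff]
    split_ifs <;> push_cast <;> module
  rw [spinForm, sum_congr rfl fun t _ => split_coeff t, sum_sub_distrib, sum_add_distrib,
    sum_ite_eq_of_mem' _ _ _ (mem_Icc.mpr ⟨hn, le_rfl⟩), sum_ite_mem, inter_eq_right.mpr hT,
    sum_Icc_ite_succ_mem hn hT (by rw [xsj_index_zero, smul_zero]), sum_sub_distrib, add_sub_assoc]

theorem level_pred (ht : 1 ≤ t) : level ι n s T (t - 1) =
    s + PABC ι n (t - 1) + n - t + 1 + Nat.count (· ∈ T) t := by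
  rw [level, Nat.sub_add_cancel ht, Nat.cast_sub ht, Nat.cast_one]
  ring

theorem level_top (hT : T ⊆ Icc 1 n) : level ι n s T n = s + #T + PABC ι n n := by
  have below : {t ∈ range (n + 1) | t ∈ T} = T := by
    rw [filter_mem_eq_inter, inter_eq_right]
    exact hT.trans fun t ht => by rw [mem_Icc] at ht; exact mem_range.mpr (by omega)
  rw [level, Nat.count_eq_card_filter_range, below]
  ring

theorem card_add_card_filter_lt_sdiff (hT : T ⊆ Icc 1 n) (ht : t ≤ n) :
    #T + #{v ∈ Icc 1 n \ T | t < v} + t = n + Nat.count (· ∈ T) (t + 1) := by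
  have above : {v ∈ Icc 1 n \ T | t < v} = Ioc t n \ {v ∈ T | t < v} := by grind
  have below : {r ∈ range (t + 1) | r ∈ T} = {v ∈ T | ¬ t < v} := by grind
  have hsub : {v ∈ T | t < v} ⊆ Ioc t n := by grind
  have hle := card_le_card hsub
  rw [Nat.count_eq_card_filter_range, below, above, card_sdiff_of_subset hsub,
    ← card_filter_add_card_filter_not (s := T) (t < ·)]
  rw [Nat.card_Ioc] at hle ⊢
  omega

theorem boxB_eq_of_notMem (hT : T ⊆ Icc 1 n) (ht : t ∈ Icc 1 n) (htT : t ∉ T) :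
    boxB ι n (s + #T + #{v ∈ Icc 1 n \ T | t < v}) t =
      xsj ι n (level ι n s T t) t - xsj ι n (level ι n s T (t - 1)) (t - 1) := by
  rw [mem_Icc] at ht
  have hcard := card_add_card_filter_lt_sdiff hT ht.2
  have hcount := Nat.count_succ (· ∈ T) t
  rw [if_neg htT] at hcount
  rw [boxB, if_pos ht.2, level_pred ht.1, level]
  congr 2 <;> omega

theorem boxB_bar_eq (ht : t ∈ Icc 1 n) (htT : t ∈ T) :
    boxB ι n (s + Nat.count (· ∈ T) t) (2 * n + 1 - t) =
      xsj ι n (level ι n s T (t - 1)) (t - 1) - xsj ι n (level ι n s T t) t := by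
  rw [mem_Icc] at ht
  have hpred : 2 * n - (2 * n + 1 - t) = t - 1 := by omega
  have hbar : 2 * n + 1 - (2 * n + 1 - t) = t := by omega
  rw [boxB, if_neg (by omega), hpred, hbar, level_pred ht.1, level, Nat.count_succ, if_pos htT]
  congr 2 <;> push_cast <;> ring

theorem boxC_bar_eq (ht : t ∈ Icc 1 n) (htT : t ∈ T) :
    boxC ι n (s + Nat.count (· ∈ T) t) (2 * n + 1 - t) =
      xsj ι n (level ι n s T (t - 1)) (t - 1) -
        (if t = n then 2 else 1 : ℚ) • xsj ι n (level ι n s T t) t := by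
  by_cases htn : t = n
  · subst htn
    rw [mem_Icc] at ht
    rw [boxC, if_neg (by omega), if_neg (by omega), if_neg (by omega), if_pos (by omega),
      if_pos rfl, level_pred ht.1, level, Nat.count_succ, if_pos htT]
    congr 2
    · ring
    · congr 1
      push_cast
      ring
  · have boxC_eq : boxC ι n (s + Nat.count (· ∈ T) t) (2 * n + 1 - t) =
        boxB ι n (s + Nat.count (· ∈ T) t) (2 * n + 1 - t) := by
      rw [mem_Icc] at ht
      rw [boxC, boxB, if_neg (by omega), if_neg (by omega), if_neg (by omega), if_neg (by omega),
        if_neg (by omega)]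
    rw [boxC_eq, boxB_bar_eq ht htT, if_neg htn, one_smul]

theorem strictAntiOn_bar (n : ℕ) : StrictAntiOn (2 * n + 1 - ·) (Icc 1 n : Finset ℕ) := by
  intro a ha b hb hab
  rw [coe_Icc, Set.mem_Icc] at ha hb
  change 2 * n + 1 - b < 2 * n + 1 - a
  omega

theorem columnForm_columnB (hn : 1 ≤ n) (hT : T ⊆ Icc 1 n) :
    columnForm (boxB ι n) s (columnB n T) = spinForm ι n 2 s T := by
  have hbar := (strictAntiOn_bar n).mono (coe_subset.mpr hT)
  have unbarred_lt_barred : ∀ u ∈ Icc 1 n \ T, ∀ v ∈ T.image (2 * n + 1 - ·), u < v := by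
    grind
  have telescope := sum_Icc_sub hn fun t =>
    xsj ι n (level ι n s T (t - 1)) (t - 1)
  simp only [Nat.add_sub_cancel, Nat.sub_self, xsj_index_zero, sub_zero] at telescope
  rw [columnB, columnForm_union unbarred_lt_barred, card_image_of_injOn hbar.injOn,
    columnForm_image hbar, columnForm, spinForm_eq_add_sum hn hT, ← telescope,
    ← sum_sdiff hT, add_assoc, ← sum_add_distrib]
  congr 1
  · exact sum_congr rfl fun t ht =>
      boxB_eq_of_notMem hT (mem_sdiff.mp ht).1 (mem_sdiff.mp ht).2
  · refine sum_congr rfl fun t ht => ?_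
    rw [boxB_bar_eq (hT ht) ht]
    split_ifs <;> push_cast <;> module

theorem columnForm_columnC (hn : 1 ≤ n) (hT : T ⊆ Icc 1 n) :
    columnForm (boxC ι n) s (columnC n T) = spinForm ι n 1 s T := by
  have hbar := (strictAntiOn_bar n).mono (coe_subset.mpr hT)
  have zero_lt_barred : ∀ u ∈ ({0} : Finset ℕ), ∀ v ∈ T.image (2 * n + 1 - ·), u < v := by
    grind
  rw [columnC, columnForm_union zero_lt_barred, card_image_of_injOn hbar.injOn,
    columnForm_image hbar, columnForm, sum_singleton, spinForm_eq_add_sum hn hT, level_top hT]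
  congr 1
  · simp [boxC, filter_singleton]
  · refine sum_congr rfl fun t ht => ?_
    rw [boxC_bar_eq (hT ht) ht, Int.cast_one, one_smul]

theorem card_columnB (hT : T ⊆ Icc 1 n) : #(columnB n T) = n := by
  have hbar := (strictAntiOn_bar n).mono (coe_subset.mpr hT)
  have hdisj : Disjoint (Icc 1 n \ T) (T.image (2 * n + 1 - ·)) := by grind [disjoint_left]
  rw [columnB, card_union_of_disjoint hdisj, card_image_of_injOn hbar.injOn,
    card_sdiff_add_card_eq_card hT, Nat.card_Icc, Nat.add_sub_cancel]

theorem exists_eq_columnB_iff {U : Finset ℕ} : (∃ T ⊆ Icc 1 n, U = columnB n T) ↔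
    #U = n ∧ U ⊆ Icc 1 (2 * n) ∧ Set.InjOn (absJ n) U := by
  constructor
  · rintro ⟨T, hT, rfl⟩
    refine ⟨card_columnB hT, by grind [columnB], ?_⟩
    intro u hu v hv h
    grind [columnB, absJ]
  · rintro ⟨hcard, hU, hinj⟩
    have hT : {t ∈ Icc 1 n | 2 * n + 1 - t ∈ U} ⊆ Icc 1 n := filter_subset _ _
    refine ⟨_, hT, eq_of_subset_of_card_le (fun u hu => ?_) (by rw [card_columnB hT, hcard])⟩
    have hu' := mem_Icc.mp (hU hu)
    rw [columnB, mem_union, mem_sdiff, mem_image]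
    rcases le_or_gt u n with hun | hnu
    · refine .inl ⟨mem_Icc.mpr ⟨hu'.1, hun⟩, fun hbar => ?_⟩
      have := hinj hu (mem_filter.mp hbar).2 (by grind [absJ])
      omega
    · have hbar : 2 * n + 1 - (2 * n + 1 - u) = u := by omega
      exact .inr ⟨2 * n + 1 - u, by rw [mem_filter, mem_Icc, hbar]; exact ⟨by omega, hu⟩, hbar⟩

theorem exists_eq_columnC_iff {U : Finset ℕ} : (∃ T ⊆ Icc 1 n, U = columnC n T) ↔
    0 ∈ U ∧ U.erase 0 ⊆ Icc (n + 1) (2 * n) := by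
  constructor
  · rintro ⟨T, hT, rfl⟩
    grind [columnC]
  · rintro ⟨h0, hU⟩
    refine ⟨{t ∈ Icc 1 n | 2 * n + 1 - t ∈ U}, filter_subset _ _, ?_⟩
    have himage : {t ∈ Icc 1 n | 2 * n + 1 - t ∈ U}.image (2 * n + 1 - ·) = U.erase 0 := by
      ext u
      rw [mem_image]
      refine ⟨by grind, fun hu => ⟨2 * n + 1 - u, ?_⟩⟩
      have hu' := mem_Icc.mp (hU hu)
      have hbar : 2 * n + 1 - (2 * n + 1 - u) = u := by omega
      rw [mem_filter, mem_Icc, hbar]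
      exact ⟨⟨by omega, mem_of_mem_erase hu⟩, rfl⟩
    rw [columnC, himage, ← insert_eq, insert_erase h0]

theorem injOn_Icc_one_iff {α : Type*} {k : ℕ} {f : ℕ → α} :
    Set.InjOn f (Icc 1 k : Finset ℕ) ↔ ∀ l m, 1 ≤ l → l < m → m ≤ k → f l ≠ f m := by
  rw [coe_Icc]
  refine ⟨fun h l m hl hlm hm heq => hlm.ne (h ⟨hl, by omega⟩ ⟨by omega, hm⟩ heq), fun h => ?_⟩
  intro l hl m hm heq
  by_contra hne
  rcases lt_or_gt_of_ne hne with hlm | hml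
  · exact h l m hl.1 hlm hm.2 heq
  · exact h m l hm.1 hml hl.2 heq.symm

theorem exists_tab_boxB_iff (hn : 1 ≤ n) {φ : ℕ → ℚ} :
    (∃ j : ℕ → ℕ, (∀ i, 1 ≤ i → i ≤ n → 1 ≤ j i ∧ j i ≤ 2 * n) ∧
      (∀ i, 1 ≤ i → i < n → j i < j (i + 1)) ∧
      (∀ l m, 1 ≤ l → l < m → m ≤ n → absJ n (j l) ≠ absJ n (j m)) ∧
      φ = tab (boxB ι n) s n j) ↔
    ∃ T ⊆ Icc 1 n, φ = spinForm ι n 2 s T := by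
  have image_iff {j : ℕ → ℕ} (hj : StrictMonoOn j (Icc 1 n : Finset ℕ)) :
      (Icc 1 n).image j ⊆ Icc 1 (2 * n) ∧ Set.InjOn (absJ n) ((Icc 1 n).image j) ↔
        (∀ i, 1 ≤ i → i ≤ n → 1 ≤ j i ∧ j i ≤ 2 * n) ∧
        ∀ l m, 1 ≤ l → l < m → m ≤ n → absJ n (j l) ≠ absJ n (j m) := by
    rw [coe_image, ← hj.injOn.comp_iff, injOn_Icc_one_iff]
    simp only [image_subset_iff, mem_Icc, and_imp, Function.comp_apply]
  calc
    _ ↔ ∃ j : ℕ → ℕ, StrictMonoOn j (Icc 1 n : Finset ℕ) ∧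
          ((Icc 1 n).image j ⊆ Icc 1 (2 * n) ∧ Set.InjOn (absJ n) ((Icc 1 n).image j)) ∧
          φ = tab (boxB ι n) s n j := by
      refine exists_congr fun j => ?_
      rw [← strictMonoOn_Icc_one_iff, and_left_comm, ← and_assoc (a := ∀ i, _)]
      exact and_congr_right fun hj => and_congr_left' (image_iff hj).symm
    _ ↔ ∃ U, #U = n ∧ (U ⊆ Icc 1 (2 * n) ∧ Set.InjOn (absJ n) U) ∧
          φ = columnForm (boxB ι n) s U :=
      exists_tab_iff fun U => U ⊆ Icc 1 (2 * n) ∧ Set.InjOn (absJ n) U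
    _ ↔ ∃ U, (∃ T ⊆ Icc 1 n, U = columnB n T) ∧ φ = columnForm (boxB ι n) s U := by
      simp only [exists_eq_columnB_iff, and_assoc]
    _ ↔ ∃ T ⊆ Icc 1 n, φ = spinForm ι n 2 s T := by
      constructor
      · rintro ⟨_, ⟨T, hT, rfl⟩, rfl⟩
        exact ⟨T, hT, columnForm_columnB hn hT⟩
      · rintro ⟨T, hT, rfl⟩
        exact ⟨_, ⟨T, hT, rfl⟩, (columnForm_columnB hn hT).symm⟩

theorem zero_cons_barred_iff_strictMonoOn {k : ℕ} {j : ℕ → ℕ} :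
    (j 1 = 0 ∧ 1 ≤ k ∧ k ≤ n + 1 ∧ (∀ i, 2 ≤ i → i ≤ k → n + 1 ≤ j i ∧ j i ≤ 2 * n) ∧
      ∀ i, 2 ≤ i → i < k → j i < j (i + 1)) ↔
    StrictMonoOn j (Icc 1 k : Finset ℕ) ∧ 0 ∈ (Icc 1 k).image j ∧
      ((Icc 1 k).image j).erase 0 ⊆ Icc (n + 1) (2 * n) := by
  constructor
  · rintro ⟨hzero, hk, -, hrange, hmono⟩
    refine ⟨strictMonoOn_Icc_one_iff.mpr fun i hi hik => ?_, by grind, by grind⟩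
    rcases hi.eq_or_lt with rfl | hi
    · exact hzero ▸ n.succ_pos.trans_le (hrange 2 le_rfl hik).1
    · exact hmono i hi hik
  · rintro ⟨hj, h0, hrange⟩
    obtain ⟨i, hi, hji⟩ := mem_image.mp h0
    have hk : 1 ≤ k := (mem_Icc.mp hi).1.trans (mem_Icc.mp hi).2
    have h1 : 1 ∈ Icc 1 k := mem_Icc.mpr ⟨le_rfl, hk⟩
    have hzero : j 1 = 0 := Nat.le_zero.mp (hji ▸ hj.monotoneOn h1 hi (mem_Icc.mp hi).1)
    have hcard := card_le_card hrange
    rw [card_erase_of_mem h0, card_image_of_injOn hj.injOn, Nat.card_Icc, Nat.card_Icc] at hcard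
    refine ⟨hzero, hk, by omega, fun i hi hik => ?_,
      fun i hi => strictMonoOn_Icc_one_iff.mp hj i (by omega)⟩
    have hi' : i ∈ Icc 1 k := mem_Icc.mpr ⟨by omega, hik⟩
    have hpos : 0 < j i := hzero ▸ hj h1 hi' hi
    exact mem_Icc.mp (hrange (mem_erase.mpr ⟨hpos.ne', mem_image_of_mem j hi'⟩))

theorem exists_tab_boxC_iff (hn : 1 ≤ n) {φ : ℕ → ℚ} :
    (∃ (k : ℕ) (j : ℕ → ℕ), j 1 = 0 ∧ 1 ≤ k ∧ k ≤ n + 1 ∧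
      (∀ i, 2 ≤ i → i ≤ k → n + 1 ≤ j i ∧ j i ≤ 2 * n) ∧
      (∀ i, 2 ≤ i → i < k → j i < j (i + 1)) ∧ φ = tab (boxC ι n) s k j) ↔
    ∃ T ⊆ Icc 1 n, φ = spinForm ι n 1 s T := by
  calc
    _ ↔ ∃ k, ∃ j : ℕ → ℕ, StrictMonoOn j (Icc 1 k : Finset ℕ) ∧
          (0 ∈ (Icc 1 k).image j ∧ ((Icc 1 k).image j).erase 0 ⊆ Icc (n + 1) (2 * n)) ∧
          φ = tab (boxC ι n) s k j := by
      refine exists₂_congr fun k j => ?_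
      simpa only [and_assoc] using
        and_congr_left' (c := φ = _) (zero_cons_barred_iff_strictMonoOn (n := n) (k := k) (j := j))
    _ ↔ ∃ k U, #U = k ∧ (0 ∈ U ∧ U.erase 0 ⊆ Icc (n + 1) (2 * n)) ∧
          φ = columnForm (boxC ι n) s U :=
      exists_congr fun k => exists_tab_iff fun U => 0 ∈ U ∧ U.erase 0 ⊆ Icc (n + 1) (2 * n)
    _ ↔ ∃ U, (∃ T ⊆ Icc 1 n, U = columnC n T) ∧ φ = columnForm (boxC ι n) s U := by
      simp only [exists_eq_columnC_iff, exists_comm (α := ℕ), exists_eq_left']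
    _ ↔ ∃ T ⊆ Icc 1 n, φ = spinForm ι n 1 s T := by
      constructor
      · rintro ⟨_, ⟨T, hT, rfl⟩, rfl⟩
        exact ⟨T, hT, columnForm_columnC hn hT⟩
      · rintro ⟨T, hT, rfl⟩
        exact ⟨_, ⟨T, hT, rfl⟩, (columnForm_columnC hn hT).symm⟩

end Tableaux

/-- Lemma 5.5: (i) in type B, the forms obtained from the `x_{r,n}` (`r ≥ 1`) by the
operators `S_l` are exactly the `n`-row tableaux of `Tab_{B,ι}` with all entries in `J_B`;
(ii) in type C, they are exactly the tableaux of `Tab_{C,ι}` whose first entry is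
`ovl(n+1)` (encoded `0`). -/
theorem xi_from_xrn_BC (n : ℕ) (hn : 2 ≤ n) (ι : ℕ → ℕ) (hadm : Admissible n ι) :
    (Adapted n (cartanB n) ι →
      { φ : ℕ → ℚ |
          XiMemFrom (cartanB n) ι { ψ | ∃ r, 1 ≤ r ∧ ψ = xc (occPos ι n r) } φ } =
      { T : ℕ → ℚ | ∃ (s : ℤ) (j : ℕ → ℕ),
          (∀ i, 1 ≤ i → i ≤ n → 1 ≤ j i ∧ j i ≤ 2 * n) ∧
          (∀ i, 1 ≤ i → i < n → j i < j (i + 1)) ∧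
          (∀ l m, 1 ≤ l → l < m → m ≤ n → absJ n (j l) ≠ absJ n (j m)) ∧
          1 - (PABC ι n n : ℤ) ≤ s ∧
          T = tab (boxB ι n) s n j }) ∧
    (Adapted n (cartanC n) ι →
      { φ : ℕ → ℚ |
          XiMemFrom (cartanC n) ι { ψ | ∃ r, 1 ≤ r ∧ ψ = xc (occPos ι n r) } φ } =
      { T : ℕ → ℚ | ∃ (k : ℕ) (s : ℤ) (j : ℕ → ℕ),
          j 1 = 0 ∧ 1 ≤ k ∧ k ≤ n + 1 ∧
          (∀ i, 2 ≤ i → i ≤ k → n + 1 ≤ j i ∧ j i ≤ 2 * n) ∧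
          (∀ i, 2 ≤ i → i < k → j i < j (i + 1)) ∧
          1 - (PABC ι n n : ℤ) ≤ s ∧
          T = tab (boxC ι n) s k j }) := by
  have hn1 : 1 ≤ n := one_le_two.trans hn
  constructor
  · intro had
    ext φ
    rw [Set.mem_ofPred_eq, Set.mem_ofPred_eq,
      xiMemFrom_iff_spinForm hadm had (isCartanBC_cartanB n)]
    refine exists_congr fun s => ?_
    rw [exists_and_left, ← exists_tab_boxB_iff hn1, ← exists_and_left]
    exact exists_congr fun j => by tauto
  · intro had
    ext φ
    rw [Set.mem_ofPred_eq, Set.mem_ofPred_eq, exists_comm,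
      xiMemFrom_iff_spinForm hadm had (isCartanBC_cartanC n)]
    refine exists_congr fun s => ?_
    rw [exists_and_left, ← exists_tab_boxC_iff hn1, ← exists_and_left]
    refine exists_congr fun k => ?_
    rw [← exists_and_left]
    exact exists_congr fun j => by tauto
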